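/- Fix c > 0, α ∈ (0,1), κ ∈ (0,1), and an even integer q ≥ 4, and set b := α/(8c(1+e)). Then there exists a positive integer N₀ (depending only on c, α, κ, q) such that for every integer N > N₀ the following holds: for every continuous-time quantum walk as in the context with N′ := ⌈(N−1)/(q−2)⌉ and with |K_l(t)| ≤ c(l+1) for all l ≤ M := ⌊N^α⌋ (assuming M ≤ N′) and all t, one has E_{s,t}[l] < κ·N′ for all 0 ≤ t ≤ b·log N; consequently the scrambling time t_{s,κ} := inf{ t > 0 : E_{s,t}[l] ≥ κ·N′ } satisfies t_{s,κ} ≥ b·log N. -/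

import Mathlib

theorem aux_sum (n : ℕ) (f k p : ℕ → ℝ) :
    ∑ l ∈ Finset.range (n + 1), f l * (2 * p l * ((if l = 0 then 0 else k (l - 1) * p (l - 1))
      - k l * p (l + 1)))
    = ∑ l ∈ Finset.range n, 2 * (f (l + 1) - f l) * (k l * (p l * p (l + 1)))
      - 2 * f n * k n * p n * p (n + 1) := by
  induction n with
  | zero => simp; ring
  | succ n ih =>
    rw [Finset.sum_range_succ, ih, Finset.sum_range_succ]
    simp
    ring

theorem aux_bound (c : ℝ) (hc : 0 < c) (M n : ℕ) (k p : ℕ → ℝ) (hkn : k n = 0)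
    (hk : ∀ l ≤ M, |k l| ≤ c * (l + 1))
    (hp : ∑ l ∈ Finset.range (n + 1), p l ^ 2 = 1) :
    ∑ l ∈ Finset.range (n + 1), ((min l M : ℕ) : ℝ) *
      (2 * p l * ((if l = 0 then 0 else k (l - 1) * p (l - 1)) - k l * p (l + 1)))
    ≤ c * (2 * ∑ l ∈ Finset.range (n + 1), ((min l M : ℕ) : ℝ) * p l ^ 2 + 1) := by
  rw [aux_sum n (fun l => ((min l M : ℕ) : ℝ)) k p, hkn]
  have h1 : ∀ l ∈ Finset.range n,
      2 * (((min (l + 1) M : ℕ) : ℝ) - ((min l M : ℕ) : ℝ)) * (k l * (p l * p (l + 1)))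
      ≤ c * ((((min l M : ℕ) : ℝ) + 1) * p l ^ 2) +
        c * (((min (l + 1) M : ℕ) : ℝ) * p (l + 1) ^ 2) := by
    intro l _
    by_cases h : l < M
    · rw [min_eq_left (by omega : l + 1 ≤ M), min_eq_left h.le]
      have hb := hk l h.le
      have h2 : k l * (p l * p (l + 1)) ≤ (c * (l + 1)) * (|p l| * |p (l + 1)|) := by
        calc k l * (p l * p (l + 1)) ≤ |k l * (p l * p (l + 1))| := le_abs_self _
          _ = |k l| * (|p l| * |p (l + 1)|) := by rw [abs_mul, abs_mul]
          _ ≤ _ := by gcongr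
      have h3 : 2 * (|p l| * |p (l + 1)|) ≤ p l ^ 2 + p (l + 1) ^ 2 := by
        have := two_mul_le_add_sq |p l| |p (l + 1)|
        simp only [sq_abs] at this
        linarith
      have h4 : 0 ≤ c * ((l : ℝ) + 1) := by positivity
      have h5 := mul_le_mul_of_nonneg_left h3 h4
      push_cast
      linarith
    · rw [min_eq_right (by omega : M ≤ l + 1), min_eq_right (by omega : M ≤ l)]
      rw [sub_self]
      simp only [mul_zero, zero_mul]
      positivity
  have h2 := Finset.sum_le_sum h1
  rw [Finset.sum_add_distrib, ← Finset.mul_sum, ← Finset.mul_sum] at h2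
  have h3 : ∑ l ∈ Finset.range n, ((((min l M : ℕ) : ℝ) + 1) * p l ^ 2)
      ≤ ∑ l ∈ Finset.range (n + 1), ((min l M : ℕ) : ℝ) * p l ^ 2 + 1 := by
    simp only [add_mul, one_mul]
    rw [← hp, ← Finset.sum_add_distrib, Finset.sum_range_succ]
    have : 0 ≤ ((min n M : ℕ) : ℝ) * p n ^ 2 + p n ^ 2 := by positivity
    linarith
  have h4 : ∑ l ∈ Finset.range n, (((min (l + 1) M : ℕ) : ℝ) * p (l + 1) ^ 2)
      = ∑ l ∈ Finset.range (n + 1), ((min l M : ℕ) : ℝ) * p l ^ 2 := by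
    rw [Finset.sum_range_succ']
    simp
  rw [h4] at h2
  have h5 := mul_le_mul_of_nonneg_left h3 hc.le
  simp only [mul_zero, zero_mul, sub_zero]
  linarith

theorem aux_gronwall (c : ℝ) (G G' : ℝ → ℝ) (hG : ∀ t, HasDerivAt G (G' t) t)
    (hle : ∀ t, G' t ≤ c * (2 * G t + 1)) (h0 : G 0 = 0) (t : ℝ) (ht : 0 ≤ t) :
    2 * G t + 1 ≤ Real.exp (2 * c * t) := by
  have hd : ∀ s, HasDerivAt (fun s => (2 * G s + 1) * Real.exp (-(2 * c * s)))
      ((2 * G' s) * Real.exp (-(2 * c * s)) +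
        (2 * G s + 1) * (Real.exp (-(2 * c * s)) * (-(2 * c * 1)))) s := by
    intro s
    exact (((hG s).const_mul 2).add_const 1).mul
      (((hasDerivAt_id s).const_mul (2 * c)).neg.exp)
  have hanti : Antitone (fun s => (2 * G s + 1) * Real.exp (-(2 * c * s))) := by
    apply antitone_of_deriv_nonpos (fun s => (hd s).differentiableAt)
    intro s
    rw [(hd s).deriv]
    have := mul_le_mul_of_nonneg_right (hle s) (Real.exp_pos (-(2 * c * s))).le
    linarith
  have h := hanti ht
  simp only [h0] at h
  rw [Real.exp_neg, ← div_eq_mul_inv, div_le_iff₀ (Real.exp_pos _)] at h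
  simpa using h


/-- `N′ := ⌈(N−1)/(q−2)⌉`. -/
def Nprime (N q : ℕ) : ℕ := (N + q - 4) / (q - 2)

/-- Fast scrambling for the quantum walk: with `b := α/(8c(1+e))`, there is `N₀` (depending
only on `c, α, κ, q`) such that for `N > N₀`, any quantum walk with `N′ = ⌈(N−1)/(q−2)⌉` and
rates bounded by `|K_l(t)| ≤ c(l+1)` for `l ≤ M = ⌊N^α⌋ (≤ N′)` satisfies
`E_{s,t}[l] < κN′` for all `0 ≤ t ≤ b log N`; consequently `t_{s,κ} ≥ b log N`. -/
theorem walk_scrambling_time (c α κ : ℝ) (hc : 0 < c)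
    (hα0 : 0 < α) (hα1 : α < 1) (hκ0 : 0 < κ) (hκ1 : κ < 1)
    (q : ℕ) (hqeven : Even q) (hq4 : 4 ≤ q) :
    ∃ N₀ : ℕ, 0 < N₀ ∧ ∀ N : ℕ, N₀ < N →
      ∀ (K : ℕ → ℝ → ℝ) (φ : ℕ → ℝ → ℝ),
      (∀ l, Continuous (K l)) →
      (∀ t : ℝ, K (Nprime N q) t = 0) →
      (∀ l ≤ Nprime N q, ∀ t : ℝ, HasDerivAt (φ l)
        ((if l = 0 then 0 else K (l - 1) t * φ (l - 1) t) - K l t * φ (l + 1) t) t) →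
      φ 0 0 = 1 → (∀ l, 0 < l → φ l 0 = 0) →
      (∀ t : ℝ, ∑ l ∈ Finset.range (Nprime N q + 1), (φ l t) ^ 2 = 1) →
      Nat.floor ((N : ℝ) ^ α) ≤ Nprime N q →
      (∀ l ≤ Nat.floor ((N : ℝ) ^ α), ∀ t : ℝ, |K l t| ≤ c * (l + 1)) →
      ((∀ t : ℝ, 0 ≤ t → t ≤ (α / (8 * c * (1 + Real.exp 1))) * Real.log N →
          ∑ l ∈ Finset.range (Nprime N q + 1), (l : ℝ) * (φ l t) ^ 2 < κ * Nprime N q) ∧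
       (∀ t : ℝ, 0 < t →
          κ * Nprime N q ≤ ∑ l ∈ Finset.range (Nprime N q + 1), (l : ℝ) * (φ l t) ^ 2 →
          (α / (8 * c * (1 + Real.exp 1))) * Real.log N ≤ t)) := by

  have htend : Filter.Tendsto (fun N : ℕ => (N : ℝ) ^ (α / 2)) Filter.atTop Filter.atTop :=
    (tendsto_rpow_atTop (by linarith)).comp tendsto_natCast_atTop_atTop
  obtain ⟨N₁, hN₁⟩ := Filter.eventually_atTop.1 (htend.eventually_gt_atTop (2 / κ))
  refine ⟨N₁ + 1, by omega, ?_⟩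
  intro N hN K φ hKc hKn hφ h00 h0l hnorm hM hK
  have key : ∀ t : ℝ, 0 ≤ t → t ≤ (α / (8 * c * (1 + Real.exp 1))) * Real.log N →
      ∑ l ∈ Finset.range (Nprime N q + 1), (l : ℝ) * (φ l t) ^ 2 < κ * Nprime N q := by
    intro t ht0 ht
    have hbig := hN₁ N (by omega)
    generalize Nprime N q = n at *
    set M := Nat.floor ((N : ℝ) ^ α) with hMdef
    set y := (N : ℝ) ^ (α / 2) with hy
    have hN1 : (1 : ℝ) ≤ N := by exact_mod_cast (by omega : 1 ≤ N)
    have hlog : 0 ≤ Real.log N := Real.log_nonneg hN1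
    have hyy : (N : ℝ) ^ α = y * y := by
      rw [hy, ← Real.rpow_add (by linarith)]; congr 1; ring
    have hκy : 2 < κ * y := by
      rw [div_lt_iff₀ hκ0] at hbig; linarith
    have hy2 : 2 < y := by nlinarith
    have hMlow : y * y / 2 < M := by
      have := Nat.lt_floor_add_one ((N : ℝ) ^ α)
      rw [hyy] at this
      rw [hMdef, hyy]
      nlinarith
    have hMpos : (0 : ℝ) < M := by nlinarith
    have hMn : (M : ℝ) ≤ n := by exact_mod_cast hM
    have hexp : Real.exp (2 * c * t) ≤ y := by
      rw [hy, Real.rpow_def_of_pos (by linarith)]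
      apply Real.exp_le_exp.2
      have he : 0 < Real.exp 1 := Real.exp_pos 1
      have hb : 2 * c * (α / (8 * c * (1 + Real.exp 1))) ≤ α / 2 := by
        have : 2 * c * (α / (8 * c * (1 + Real.exp 1))) = α / (4 * (1 + Real.exp 1)) := by
          field_simp; ring
        rw [this]
        apply div_le_div_of_nonneg_left hα0.le (by norm_num)
        linarith
      calc 2 * c * t ≤ 2 * c * ((α / (8 * c * (1 + Real.exp 1))) * Real.log N) := by gcongr
        _ = (2 * c * (α / (8 * c * (1 + Real.exp 1)))) * Real.log N := by ring
        _ ≤ (α / 2) * Real.log N := by gcongr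
        _ = _ := by ring
    have hg := aux_gronwall c
      (fun s => ∑ l ∈ Finset.range (n + 1), ((min l M : ℕ) : ℝ) * φ l s ^ 2)
      (fun s => ∑ l ∈ Finset.range (n + 1), ((min l M : ℕ) : ℝ) *
        (2 * φ l s * ((if l = 0 then 0 else K (l - 1) s * φ (l - 1) s) - K l s * φ (l + 1) s)))
      (by
        intro s
        apply HasDerivAt.fun_sum
        intro l hl
        have := ((hφ l (by simpa [Nat.lt_succ_iff] using hl) s).pow 2).const_mul
          ((min l M : ℕ) : ℝ)
        simpa using this)
      (fun s => aux_bound c hc M n (fun l => K l s) (fun l => φ l s) (hKn s)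
        (fun l hl => hK l hl s) (hnorm s))
      (by
        apply Finset.sum_eq_zero
        intro l _
        rcases Nat.eq_zero_or_pos l with rfl | h
        · simp
        · simp [h0l l h])
      t ht0
    have hE : (M : ℝ) * ∑ l ∈ Finset.range (n + 1), (l : ℝ) * (φ l t) ^ 2 ≤
        n * ∑ l ∈ Finset.range (n + 1), ((min l M : ℕ) : ℝ) * φ l t ^ 2 := by
      rw [Finset.mul_sum, Finset.mul_sum]
      apply Finset.sum_le_sum
      intro l hl
      have hln : l ≤ n := by simpa [Nat.lt_succ_iff] using hl
      have : (M : ℝ) * l ≤ n * ((min l M : ℕ) : ℝ) := by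
        have : M * l ≤ n * min l M := by
          rcases le_total l M with h | h
          · rw [min_eq_left h]; gcongr
          · rw [min_eq_right h, mul_comm]; gcongr
        exact_mod_cast this
      rw [← mul_assoc, ← mul_assoc]
      gcongr
    have hn : (0 : ℝ) < n := by linarith
    have hF : ∑ l ∈ Finset.range (n + 1), ((min l M : ℕ) : ℝ) * φ l t ^ 2 < κ * M := by
      nlinarith
    have h6 := mul_lt_mul_of_pos_left hF hn
    have h7 : (M : ℝ) * ∑ l ∈ Finset.range (n + 1), (l : ℝ) * (φ l t) ^ 2 < M * (κ * n) := by
      linarith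
    exact lt_of_mul_lt_mul_left h7 hMpos.le
  refine ⟨key, ?_⟩
  intro t ht h
  by_contra! hlt
  exact absurd (key t ht.le hlt.le) (not_lt.2 h)
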